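/- (Cilleruelo.) For every ε > 0 and every integer k there exists a positive integer n such that the circle x² + y² = n contains more than k lattice points, and every lattice point u ∈ ℤ² with |u|² = n satisfies |θ_u − t·π/2| < ε modulo 2π for some t ∈ {0,1,2,3}; that is, all lattice points of the circle lie on the four arcs of angular half-width ε centered at the half-axis directions. -/

import Mathlib

/-- The set of lattice points `(x, y) ∈ ℤ²` with `x² + y² = n`. -/
noncomputable def latticeCircle (n : ℕ) : Finset (ℤ × ℤ) :=
  (Finset.Icc (-(n : ℤ)) (n : ℤ) ×ˢ Finset.Icc (-(n : ℤ)) (n : ℤ)).filter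
    (fun p => p.1 ^ 2 + p.2 ^ 2 = (n : ℤ))

/-- `r n` is the number of lattice points on the circle of squared radius `n`. -/
noncomputable def latticeR (n : ℕ) : ℕ := (latticeCircle n).card

/-- The angle `θ_u ∈ [0, 2π)` of a lattice point `u`. -/
noncomputable def latticeTheta (u : ℤ × ℤ) : ℝ :=
  if 0 ≤ Complex.arg ((u.1 : ℂ) + (u.2 : ℂ) * Complex.I)
  then Complex.arg ((u.1 : ℂ) + (u.2 : ℂ) * Complex.I)
  else Complex.arg ((u.1 : ℂ) + (u.2 : ℂ) * Complex.I) + 2 * Real.pi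

/-!
A Gaussian prime `p` whose direction is within `ε / (k + 1)` of a half-axis, but not on it, solves
the problem with `n = N(p) ^ k`. The Gaussian integers of norm `n` are, up to units, the products
`p ^ a * star p ^ (k - a)`; their directions modulo `π / 2` are `(2 * a - k) • θ` with `θ` the
direction of `p`, so all of them are small, and they are pairwise distinct because `θ` has infinite
order.

Such primes exist because, following Hecke, the directions of the Gaussian primes are dense modulo
`π / 2`. By Weyl's criterion it suffices that, for `n ≠ 0`, the `L`-function of the character
`(z / ‖z‖) ^ (4 * n)` has neither a zero nor a pole at the edge `s = 2` of absolute convergence,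
whereas for `n = 0` it has a simple pole there. Comparing the sum over `ℤ[i]` with the sums over the
residue classes modulo `2 + i` continues the `L`-function past the edge: multiplied by
`1 - 5 * f (2 + i)`, with `f` the completely multiplicative summand, it becomes a series in
`f ((2 + i) * z + r) - f ((2 + i) * z)`, which converges better. The factor does not vanish at
`s = 2` for `n ≠ 0`, because `2 + i` has a direction of infinite order, and the inequality
`3 + 4 * cos φ + cos (2 * φ) ≥ 0` excludes a zero.
-/

open Filter Topology UniqueFactorizationMonoid
open scoped Real ComplexConjugate

/-! ### Limits of series and logarithmic derivatives -/

theorem norm_div_one_sub_sub_self_le {𝕜 : Type*} [NormedField 𝕜] {x : 𝕜} (hx : ‖x‖ ≤ 1 / 2) :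
    ‖x / (1 - x) - x‖ ≤ 2 * ‖x‖ ^ 2 := by
  have hge : 1 / 2 ≤ ‖1 - x‖ := by
    have := norm_sub_norm_le 1 x
    rw [norm_one] at this
    linarith
  have hne : 1 - x ≠ 0 := norm_pos_iff.mp (by linarith)
  rw [show x / (1 - x) - x = x ^ 2 / (1 - x) by field_simp; ring, norm_div, norm_pow,
    div_le_iff₀ (by linarith)]
  nlinarith [sq_nonneg ‖x‖]

theorem isOpen_lt_re (r : ℝ) : IsOpen {s : ℂ | r < s.re} :=
  isOpen_lt continuous_const Complex.continuous_re

theorem tendsto_ofReal_two : Tendsto (fun t : ℝ => (t : ℂ)) (𝓝[>] 2) (𝓝[≠] 2) := by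
  refine tendsto_nhdsWithin_iff.mpr ⟨?_, ?_⟩
  · exact (Complex.continuous_ofReal.tendsto' 2 2 (by simp)).mono_left nhdsWithin_le_nhds
  · filter_upwards [self_mem_nhdsWithin] with t ht
    exact Complex.ofReal_injective.ne (ne_of_gt ht)

theorem summable_of_tendsto_tsum {ι κ : Type*} {l : Filter ι} [l.NeBot] {f : ι → κ → ℝ}
    {g : κ → ℝ} {c : ℝ} (hf0 : ∀ i k, 0 ≤ f i k) (hf : ∀ᶠ i in l, Summable (f i))
    (hfg : ∀ k, Tendsto (f · k) l (𝓝 (g k))) (hc : Tendsto (fun i => ∑' k, f i k) l (𝓝 c)) :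
    Summable g := by
  refine summable_of_sum_le (fun k => ge_of_tendsto' (hfg k) fun i => hf0 i k) (c := c) fun u => ?_
  refine le_of_tendsto_of_tendsto (tendsto_finsetSum u fun k _ => hfg k) hc ?_
  filter_upwards [hf] with i hi
  exact hi.sum_le_tsum u fun k _ => hf0 i k

theorem tendsto_sub_mul_logDeriv {𝕜 : Type*} [NontriviallyNormedField 𝕜] [CompleteSpace 𝕜]
    {f : 𝕜 → 𝕜} {x : 𝕜} (hf : MeromorphicAt f x) (htop : meromorphicOrderAt f x ≠ ⊤) :
    Tendsto (fun z => (z - x) * logDeriv f z) (𝓝[≠] x)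
      (𝓝 ((meromorphicOrderAt f x).untop₀ : 𝕜)) := by
  obtain ⟨g, hg, hgx, hfg⟩ := (meromorphicOrderAt_ne_top_iff hf).mp htop
  set k := (meromorphicOrderAt f x).untop₀
  have hlim : Tendsto (fun z => k + (z - x) * logDeriv g z) (𝓝[≠] x) (𝓝 (k : 𝕜)) := by
    have hcont : ContinuousAt (fun z => k + (z - x) * logDeriv g z) x :=
      continuousAt_const.add ((continuousAt_id.sub continuousAt_const).mul
        (hg.deriv.continuousAt.div hg.continuousAt hgx))
    simpa using hcont.continuousWithinAt.tendsto
  refine hlim.congr' ?_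
  filter_upwards [logDeriv_congr_nhdsNE hfg, self_mem_nhdsWithin,
    hg.eventually_analyticAt.filter_mono nhdsWithin_le_nhds,
    (hg.continuousAt.eventually_ne hgx).filter_mono nhdsWithin_le_nhds] with z hz hzx hgz hgz0
  have hzx' : z - x ≠ 0 := sub_ne_zero.mpr hzx
  have hsub : DifferentiableAt 𝕜 (fun z => z - x) z := differentiableAt_id.sub_const x
  have hpow : logDeriv (fun z => (z - x) ^ k) z = k / (z - x) := by
    rw [logDeriv_fun_zpow hsub, logDeriv_apply (fun z => z - x)]
    simp [div_eq_mul_inv]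
  have hlog : logDeriv f z = k / (z - x) + logDeriv g z := by
    rw [hz, ← hpow]
    exact logDeriv_mul (f := fun z => (z - x) ^ k) z (zpow_ne_zero k hzx') hgz0
      (hsub.zpow (Or.inl hzx')) hgz.differentiableAt
  rw [hlog]
  field_simp

/-! ### Logarithmic derivatives of Euler products -/

/-- The primes that are their own `normalize`, one from each class of associates. -/
abbrev NormalizedPrime (M : Type*) [CommMonoidWithZero M] [NormalizationMonoid M] : Type _ :=
  {p : M // Prime p ∧ normalize p = p}

theorem norm_map_prime_lt_one_of_summable {M : Type*} [CommMonoidWithZero M] [IsCancelMulZero M]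
    {F : M →*₀ ℂ} (hF : Summable F) {p : M} (hp : Prime p) : ‖F p‖ < 1 := by
  rw [← summable_geometric_iff_norm_lt_one]
  simpa [Function.comp_def] using
    hF.comp_injective (pow_injective_of_not_isUnit hp.not_isUnit hp.ne_zero)

section EulerProduct

variable {M : Type*} [CommMonoidWithZero M] [UniqueFactorizationMonoid M] [NormalizationMonoid M]

open Classical in
theorem hasSum_count_normalizedFactors_mul {φ : M → ℝ}
    (hmul : ∀ a b, a ≠ 0 → b ≠ 0 → φ (a * b) = φ a + φ b) (hunit : ∀ u, IsUnit u → φ u = 0)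
    {z : M} (hz : z ≠ 0) :
    HasSum (fun p : NormalizedPrime M => (normalizedFactors z).count p.1 * φ p) (φ z) := by
  induction z using induction_on_prime with
  | h₁ => exact absurd rfl hz
  | h₂ u hu => simp [normalizedFactors_of_isUnit hu, hunit u hu]
  | h₃ a q ha hq ih =>
    have : Nontrivial M := ⟨q, 0, hq.ne_zero⟩
    have hassoc : Associated q (normalize q) := associated_normalize q
    let q' : NormalizedPrime M := ⟨normalize q, hassoc.prime hq, normalize_idem q⟩
    have hq' : φ (normalize q) = φ q := by
      obtain ⟨u, hu⟩ := hassoc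
      rw [← hu, hmul _ _ hq.ne_zero u.isUnit.ne_zero, hunit u u.isUnit, add_zero]
    have hsingle : HasSum (fun p : NormalizedPrime M =>
        (normalizedFactors q).count p.1 * φ p) (φ q) := by
      rw [normalizedFactors_irreducible hq.irreducible, ← hq']
      convert hasSum_single q' fun p hp => ?_ using 1
      · simp [q']
      · have : p.1 ≠ normalize q := fun h => hp (Subtype.ext h)
        simp [this]
    rw [normalizedFactors_mul hq.ne_zero ha, hmul _ _ hq.ne_zero ha]
    simpa only [Multiset.count_add, Nat.cast_add, add_mul] using hsingle.add (ih ha)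

variable {F : M →*₀ ℂ}

open Classical in
theorem tsum_count_normalizedFactors_mul (hF : Summable F) (p : NormalizedPrime M) {c : ℝ}
    (hcF : Summable fun z => (c * (normalizedFactors z).count p.1 : ℝ) * F z) :
    ∑' z, (c * (normalizedFactors z).count p.1 : ℝ) * F z =
      c * (∑' z, F z) * (F p / (1 - F p)) := by
  obtain ⟨p, hp, hnorm⟩ := p
  set v : M → ℕ := fun z => (normalizedFactors z).count p with hv
  have hv_mul (w : M) (hw : w ≠ 0) : v (p * w) = v w + 1 := by
    simp only [hv, normalizedFactors_mul hp.ne_zero hw,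
      normalizedFactors_irreducible hp.irreducible, hnorm, Multiset.count_add,
      Multiset.count_singleton_self, add_comm]
  have hsupport : Function.support (fun z => (c * v z : ℝ) * F z) ⊆ Set.range (p * ·) := by
    intro z hz
    have hne : v z ≠ 0 := by
      rintro h0
      simp [h0] at hz
    obtain ⟨w, rfl⟩ := dvd_of_mem_normalizedFactors (Multiset.count_ne_zero.mp hne)
    exact ⟨w, rfl⟩
  have hterm (w : M) : (c * v (p * w) : ℝ) * F (p * w) =
      F p * ((c * v w : ℝ) * F w + c * F w) := by
    rcases eq_or_ne w 0 with rfl | hw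
    · simp
    · rw [hv_mul w hw, map_mul]
      push_cast
      ring
  have hrec : ∑' z, (c * v z : ℝ) * F z =
      F p * (∑' z, (c * v z : ℝ) * F z + c * ∑' z, F z) := by
    conv_lhs => rw [← (mul_right_injective₀ hp.ne_zero).tsum_eq hsupport]
    simp only [hterm]
    rw [tsum_mul_left, hcF.tsum_add (hF.mul_left _), tsum_mul_left]
  have hne : 1 - F p ≠ 0 := by
    intro h
    have hlt := norm_map_prime_lt_one_of_summable hF hp
    rw [← sub_eq_zero.mp h] at hlt
    simp at hlt
  rw [mul_div_assoc', eq_div_iff hne]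
  linear_combination hrec

theorem tsum_additive_mul_eq_tsum_mul_tsum_prime {φ : M → ℝ}
    (hmul : ∀ a b, a ≠ 0 → b ≠ 0 → φ (a * b) = φ a + φ b) (hunit : ∀ u, IsUnit u → φ u = 0)
    (hnonneg : ∀ a, 0 ≤ φ a) (hF : Summable F) (hφF : Summable fun z => φ z * ‖F z‖) :
    ∑' z, φ z * F z = (∑' z, F z) * ∑' p : NormalizedPrime M, φ p * (F p / (1 - F p)) := by
  classical
  let g (z : M) (p : NormalizedPrime M) : ℂ := (φ p * (normalizedFactors z).count p.1 : ℝ) * F z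
  have hfactor (z : M) (hz : z ≠ 0) :
      HasSum (fun p : NormalizedPrime M => φ p * (normalizedFactors z).count p.1) (φ z) := by
    simpa only [mul_comm] using hasSum_count_normalizedFactors_mul hmul hunit hz
  have hnormg (z : M) : HasSum (fun p => ‖g z p‖) (φ z * ‖F z‖) := by
    rcases eq_or_ne z 0 with rfl | hz
    · simp [g]
    · refine ((hfactor z hz).mul_right ‖F z‖).congr_fun fun p => ?_
      rw [norm_mul, Complex.norm_real, Real.norm_of_nonneg (mul_nonneg (hnonneg p) (by positivity))]
  have hg : Summable (Function.uncurry g) := by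
    refine Summable.of_norm ((summable_prod_of_nonneg fun q => norm_nonneg _).mpr
      ⟨fun z => (hnormg z).summable, ?_⟩)
    simpa only [Function.uncurry_apply_pair, (hnormg _).tsum_eq] using hφF
  have hrow (z : M) : ∑' p, g z p = φ z * F z := by
    rcases eq_or_ne z 0 with rfl | hz
    · simp [g]
    · rw [tsum_mul_right, ← Complex.ofReal_tsum, (hfactor z hz).tsum_eq]
  have hcol (p : NormalizedPrime M) :
      ∑' z, g z p = (∑' z, F z) * (φ p * (F p / (1 - F p))) := by
    have hgp : Summable fun z => g z p := hg.prod_symm.prod_factor p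
    simp only [g] at hgp ⊢
    rw [tsum_count_normalizedFactors_mul hF p hgp]
    ring
  calc ∑' z, φ z * F z = ∑' z, ∑' p, g z p := by simp only [hrow]
    _ = ∑' p, ∑' z, g z p := (hg.tsum_comm).symm
    _ = (∑' z, F z) * ∑' p : NormalizedPrime M, φ p * (F p / (1 - F p)) := by
        simp only [hcol, tsum_mul_left]

end EulerProduct

/-! ### Weyl sums -/

section ContinuousMap

variable {X κ : Type*} [TopologicalSpace X] [CompactSpace X] {w : κ → ℝ}

theorem norm_ofReal_mul_continuousMap_le {c : ℝ} (hc : 0 ≤ c) (f : C(X, ℂ)) (x : X) :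
    ‖(c * f x : ℂ)‖ ≤ c * ‖f‖ := by
  rw [norm_mul, Complex.norm_of_nonneg hc]
  exact mul_le_mul_of_nonneg_left (f.norm_coe_le_norm x) hc

theorem summable_ofReal_mul_continuousMap (hw0 : ∀ k, 0 ≤ w k) (hw : Summable w) (x : κ → X)
    (f : C(X, ℂ)) : Summable fun k => (w k * f (x k) : ℂ) :=
  .of_norm_bounded (hw.mul_right ‖f‖) fun k => norm_ofReal_mul_continuousMap_le (hw0 k) f (x k)

theorem norm_tsum_ofReal_mul_continuousMap_le (hw0 : ∀ k, 0 ≤ w k) (hw : Summable w) (x : κ → X)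
    (f : C(X, ℂ)) : ‖∑' k, (w k * f (x k) : ℂ)‖ ≤ (∑' k, w k) * ‖f‖ :=
  tsum_of_norm_bounded (hw.hasSum.mul_right ‖f‖) fun k =>
    norm_ofReal_mul_continuousMap_le (hw0 k) f (x k)

end ContinuousMap

section WeylCriterion

variable {T : ℝ} [Fact (0 < T)] {ι κ : Type*} {l : Filter ι} {x : κ → AddCircle T} {w : ι → κ → ℝ}

theorem integral_fourier (n : ℤ) :
    ∫ y : AddCircle T, fourier n y ∂AddCircle.haarAddCircle = if n = 0 then 1 else 0 := by
  have h := congrFun (fourierCoeff_fourier (T := T) n) 0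
  simpa [fourierCoeff, Pi.single_apply, eq_comm] using h

theorem integrable_haarAddCircle (f : C(AddCircle T, ℂ)) :
    MeasureTheory.Integrable f AddCircle.haarAddCircle :=
  f.continuous.integrable_of_hasCompactSupport (HasCompactSupport.of_compactSpace f)

theorem tendsto_tsum_of_mem_span_fourier (hw0 : ∀ᶠ i in l, ∀ k, 0 ≤ w i k)
    (hw : ∀ᶠ i in l, Summable (w i))
    (h : ∀ n : ℤ, Tendsto (fun i => ∑' k, (w i k * fourier n (x k) : ℂ)) l
      (𝓝 (if n = 0 then 1 else 0)))
    {f : C(AddCircle T, ℂ)} (hf : f ∈ Submodule.span ℂ (Set.range (fourier (T := T)))) :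
    Tendsto (fun i => ∑' k, (w i k * f (x k) : ℂ)) l (𝓝 (∫ y, f y ∂AddCircle.haarAddCircle)) := by
  induction hf using Submodule.span_induction with
  | mem f hf =>
    obtain ⟨n, rfl⟩ := hf
    rw [integral_fourier]
    exact h n
  | zero => simp [tendsto_const_nhds]
  | add f g _ _ hf hg =>
    simp only [ContinuousMap.add_apply, mul_add]
    rw [MeasureTheory.integral_add (integrable_haarAddCircle f) (integrable_haarAddCircle g)]
    refine (hf.add hg).congr' ?_
    filter_upwards [hw0, hw] with i h0 hi
    exact ((summable_ofReal_mul_continuousMap h0 hi x f).tsum_add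
      (summable_ofReal_mul_continuousMap h0 hi x g)).symm
  | smul c f _ hf =>
    simp only [ContinuousMap.smul_apply, smul_eq_mul, mul_left_comm _ c, tsum_mul_left,
      MeasureTheory.integral_const_mul]
    exact hf.const_mul c

theorem tendsto_tsum_of_tendsto_fourier (hw0 : ∀ᶠ i in l, ∀ k, 0 ≤ w i k)
    (hw : ∀ᶠ i in l, Summable (w i))
    (h : ∀ n : ℤ, Tendsto (fun i => ∑' k, (w i k * fourier n (x k) : ℂ)) l
      (𝓝 (if n = 0 then 1 else 0))) (f : C(AddCircle T, ℂ)) :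
    Tendsto (fun i => ∑' k, (w i k * f (x k) : ℂ)) l (𝓝 (∫ y, f y ∂AddCircle.haarAddCircle)) := by
  have hmass : ∀ᶠ i in l, ∑' k, w i k < 2 := by
    have hone : Tendsto (fun i => ∑' k, w i k) l (𝓝 1) := by
      simpa [← Complex.ofReal_tsum, Function.comp_def] using
        (Complex.continuous_re.tendsto _).comp (h 0)
    exact hone.eventually_lt_const one_lt_two
  rw [Metric.tendsto_nhds]
  intro ε hε
  have hmem : f ∈ (Submodule.span ℂ (Set.range (fourier (T := T)))).topologicalClosure := by
    rw [span_fourier_closure_eq_top]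
    trivial
  obtain ⟨g, hg, hfg⟩ := Metric.mem_closure_iff.mp hmem (ε / 4) (by positivity)
  rw [dist_eq_norm] at hfg
  have hint : dist (∫ y, g y ∂AddCircle.haarAddCircle) (∫ y, f y ∂AddCircle.haarAddCircle) ≤
      ‖f - g‖ := by
    rw [dist_comm, dist_eq_norm, ← MeasureTheory.integral_sub (integrable_haarAddCircle f)
      (integrable_haarAddCircle g)]
    simpa using MeasureTheory.norm_integral_le_of_norm_le_const (μ := AddCircle.haarAddCircle)
      (Eventually.of_forall fun y => (f - g).norm_coe_le_norm y)
  filter_upwards [hw0, hw, hmass, Metric.tendsto_nhds.mp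
    (tendsto_tsum_of_mem_span_fourier hw0 hw h hg) (ε / 4) (by positivity)] with i h0 hi h2 hgi
  have hsum : dist (∑' k, (w i k * f (x k) : ℂ)) (∑' k, (w i k * g (x k) : ℂ)) ≤ 2 * ‖f - g‖ := by
    rw [dist_eq_norm, ← (summable_ofReal_mul_continuousMap h0 hi x f).tsum_sub
      (summable_ofReal_mul_continuousMap h0 hi x g)]
    simp only [← mul_sub, ← ContinuousMap.sub_apply]
    exact (norm_tsum_ofReal_mul_continuousMap_le h0 hi x (f - g)).trans (by gcongr)
  linarith [dist_triangle4 (∑' k, (w i k * f (x k) : ℂ)) (∑' k, (w i k * g (x k) : ℂ))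
    (∫ y, g y ∂AddCircle.haarAddCircle) (∫ y, f y ∂AddCircle.haarAddCircle)]

theorem denseRange_of_tendsto_fourier [l.NeBot] (hw0 : ∀ᶠ i in l, ∀ k, 0 ≤ w i k)
    (hw : ∀ᶠ i in l, Summable (w i))
    (h : ∀ n : ℤ, Tendsto (fun i => ∑' k, (w i k * fourier n (x k) : ℂ)) l
      (𝓝 (if n = 0 then 1 else 0))) : DenseRange x := by
  intro y
  by_contra hy
  obtain ⟨d, hd, hdy, hd01⟩ := exists_continuous_zero_one_of_isClosed isClosed_closure
    (isClosed_singleton (x := y)) (Set.disjoint_singleton_right.mpr hy)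
  have hdx (k : κ) : d (x k) = 0 := hd (subset_closure (Set.mem_range_self k))
  have hlim := tendsto_tsum_of_tendsto_fourier hw0 hw h
    ((⟨Complex.ofReal, Complex.continuous_ofReal⟩ : C(ℝ, ℂ)).comp d)
  simp only [ContinuousMap.comp_apply, ContinuousMap.coe_mk, hdx, Complex.ofReal_zero, mul_zero,
    tsum_zero] at hlim
  have hzero : ∫ y, d y ∂AddCircle.haarAddCircle = 0 := by
    have hc := tendsto_nhds_unique hlim tendsto_const_nhds
    rwa [integral_complex_ofReal, Complex.ofReal_eq_zero] at hc
  refine hzero.not_gt (d.continuous.integral_pos_of_hasCompactSupport_nonneg_nonzero (x := y)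
    (HasCompactSupport.of_compactSpace d) (fun y => (hd01 y).1) ?_)
  rw [hdy rfl]
  exact one_ne_zero

end WeylCriterion

theorem three_add_four_mul_re_fourier_add_re_fourier_nonneg {T : ℝ} (n : ℤ) (x : AddCircle T) :
    0 ≤ 3 + 4 * (fourier n x : ℂ).re + (fourier (2 * n) x : ℂ).re := by
  have hnorm : ‖(fourier n x : ℂ)‖ ^ 2 = 1 := by rw [fourier_apply, Circle.norm_coe, one_pow]
  rw [← Complex.normSq_eq_norm_sq, Complex.normSq_apply] at hnorm
  rw [two_mul, fourier_add, Complex.mul_re]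
  nlinarith [sq_nonneg ((fourier n x : ℂ).re + 1)]

theorem three_mul_re_tsum_add_four_mul_re_tsum_add_re_tsum_fourier_nonneg {κ : Type*} {T : ℝ}
    [Fact (0 < T)] {w : κ → ℝ} (hw0 : ∀ k, 0 ≤ w k)
    (hw : Summable w) (n : ℤ) (x : κ → AddCircle T) :
    0 ≤ 3 * (∑' k, (w k * fourier 0 (x k) : ℂ)).re + 4 * (∑' k, (w k * fourier n (x k) : ℂ)).re +
      (∑' k, (w k * fourier (2 * n) (x k) : ℂ)).re := by
  have hsum (m : ℤ) := Complex.hasSum_re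
    (summable_ofReal_mul_continuousMap hw0 hw x (fourier m)).hasSum
  refine ((((hsum 0).mul_left 3).add ((hsum n).mul_left 4)).add (hsum (2 * n))).nonneg fun k => ?_
  simp only [Complex.re_ofReal_mul, fourier_zero, Complex.one_re]
  linarith [mul_nonneg (hw0 k) (three_add_four_mul_re_fourier_add_re_fourier_nonneg n (x k))]

/-! ### Directions modulo a quarter turn -/

instance : Fact (0 < π / 2) := ⟨Real.pi_div_two_pos⟩

/-- The argument of a complex number modulo `π / 2`, that is, its direction up to multiplication by
the units of `ℤ[i]`. The value at `0` is `0`. -/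
noncomputable def quarterAngle (z : ℂ) : AddCircle (π / 2) := (Complex.arg z : ℝ)

theorem coe_quarter_eq_of_coe_angle_eq {a b : ℝ} (h : (a : Real.Angle) = b) :
    (a : AddCircle (π / 2)) = b := by
  obtain ⟨m, hm⟩ := Real.Angle.angle_eq_iff_two_pi_dvd_sub.mp h
  rw [← sub_eq_zero, ← AddCircle.coe_sub, AddCircle.coe_eq_zero_iff]
  exact ⟨4 * m, by rw [hm, zsmul_eq_mul]; push_cast; ring⟩

@[simp]
theorem quarterAngle_one : quarterAngle 1 = 0 := by simp [quarterAngle]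

theorem quarterAngle_mul {z w : ℂ} (hz : z ≠ 0) (hw : w ≠ 0) :
    quarterAngle (z * w) = quarterAngle z + quarterAngle w := by
  rw [quarterAngle, quarterAngle, quarterAngle, ← AddCircle.coe_add]
  apply coe_quarter_eq_of_coe_angle_eq
  rw [Real.Angle.coe_add, Complex.arg_mul_coe_angle hz hw]

theorem quarterAngle_pow {z : ℂ} (hz : z ≠ 0) (n : ℕ) :
    quarterAngle (z ^ n) = n • quarterAngle z := by
  induction n with
  | zero => simp
  | succ n ih => rw [pow_succ, quarterAngle_mul (pow_ne_zero n hz) hz, ih, succ_nsmul]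

theorem quarterAngle_conj (z : ℂ) : quarterAngle (conj z) = -quarterAngle z := by
  rw [quarterAngle, quarterAngle, ← AddCircle.coe_neg]
  apply coe_quarter_eq_of_coe_angle_eq
  rw [Real.Angle.coe_neg, Complex.arg_conj_coe_angle]

theorem fourier_quarterAngle (n : ℤ) (z : ℂ) :
    fourier n (quarterAngle z) = Complex.exp (4 * n * Complex.arg z * Complex.I) := by
  rw [quarterAngle, fourier_coe_apply]
  congr 1
  have : (π : ℂ) ≠ 0 := by exact_mod_cast Real.pi_ne_zero
  push_cast
  field_simp
  ring

theorem pow_four_eq_of_quarterAngle_eq_zero {z : ℂ} (hz : quarterAngle z = 0) :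
    z ^ 4 = (‖z‖ : ℂ) ^ 4 := by
  have h : Complex.exp (4 * Complex.arg z * Complex.I) = 1 := by
    simpa [hz] using (fourier_quarterAngle 1 z).symm
  rw [mul_assoc, ← Nat.cast_ofNat, Complex.exp_nat_mul] at h
  conv_lhs => rw [← Complex.norm_mul_exp_arg_mul_I z, mul_pow, h, mul_one]

theorem gaussianInt_toComplex_ne_zero {z : GaussianInt} (hz : z ≠ 0) : (z : ℂ) ≠ 0 :=
  GaussianInt.toComplex_eq_zero.not.mpr hz

theorem quarterAngle_star (z : GaussianInt) :
    quarterAngle (star z : GaussianInt) = -quarterAngle z := by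
  rw [GaussianInt.toComplex_star, quarterAngle_conj]

theorem quarterAngle_eq_zero_of_isUnit {u : GaussianInt} (hu : IsUnit u) :
    quarterAngle u = 0 := by
  have harg (m : ℤ) (h : Complex.arg u = m * (π / 2)) : quarterAngle u = 0 :=
    (AddCircle.coe_eq_zero_iff _).mpr ⟨m, by rw [h, zsmul_eq_mul]⟩
  obtain ⟨x, y⟩ := u
  have hnorm : x * x + y * y = 1 := by
    have := (Zsqrtd.norm_eq_one_iff' (by norm_num) _).mpr hu
    rw [Zsqrtd.norm_def] at this
    linarith
  obtain ⟨hx, hx'⟩ : -1 ≤ x ∧ x ≤ 1 := ⟨by nlinarith, by nlinarith⟩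
  obtain ⟨hy, hy'⟩ : -1 ≤ y ∧ y ≤ 1 := ⟨by nlinarith, by nlinarith⟩
  interval_cases x <;> interval_cases y <;> try omega
  · exact harg 2 (by simp [GaussianInt.toComplex_def]; ring)
  · exact harg (-1) (by simp [GaussianInt.toComplex_def])
  · exact harg 1 (by simp [GaussianInt.toComplex_def])
  · exact harg 0 (by simp [GaussianInt.toComplex_def])

theorem not_isOfFinAddOrder_quarterAngle {z : GaussianInt} (hz : IsCoprime z (star z))
    (hunit : ¬IsUnit z) : ¬IsOfFinAddOrder (quarterAngle z) := by
  intro hfin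
  obtain ⟨n, hn, h⟩ := isOfFinAddOrder_iff_nsmul_eq_zero.mp hfin
  have hz0 : (z : ℂ) ≠ 0 := by
    refine gaussianInt_toComplex_ne_zero ?_
    rintro rfl
    exact not_isCoprime_zero_zero (star_zero GaussianInt ▸ hz)
  have hreal : ((z : ℂ) ^ n) ^ 4 = (‖(z : ℂ) ^ n‖ : ℂ) ^ 4 :=
    pow_four_eq_of_quarterAngle_eq_zero (by rw [quarterAngle_pow hz0, h])
  have hstar : star z ^ (n * 4) = z ^ (n * 4) := by
    apply GaussianInt.toComplex_injective
    simp only [map_pow, GaussianInt.toComplex_star, pow_mul]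
    rw [hreal, ← map_pow, ← map_pow, hreal, map_pow, Complex.conj_ofReal]
  have hself : IsCoprime (z ^ (n * 4)) (z ^ (n * 4)) := by
    simpa only [hstar] using hz.pow (m := n * 4) (n := n * 4)
  exact hunit ((isUnit_pow_iff (by omega)).mp (isCoprime_self.mp hself))

theorem isCoprime_star_of_norm_quarterAngle_lt {p : GaussianInt} (hp : Prime p)
    (h0 : quarterAngle p ≠ 0) (hlt : ‖quarterAngle p‖ < π / 4) : IsCoprime p (star p) := by
  rw [hp.irreducible.coprime_iff_not_dvd]
  rintro ⟨u, hu⟩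
  have hu1 : u.norm = 1 := by
    have hnorm : p.norm * 1 = p.norm * u.norm := by
      rw [mul_one, ← Zsqrtd.norm_mul, ← hu, Zsqrtd.norm_conj]
    exact (mul_left_cancel₀ (GaussianInt.norm_eq_zero.not.mpr hp.ne_zero) hnorm).symm
  have hunit : IsUnit u := (Zsqrtd.norm_eq_one_iff' (by norm_num) u).mp hu1
  have hneg : -quarterAngle p = quarterAngle p := by
    rw [← quarterAngle_star, hu, map_mul, quarterAngle_mul, quarterAngle_eq_zero_of_isUnit hunit,
      add_zero]
    exacts [gaussianInt_toComplex_ne_zero hp.ne_zero, gaussianInt_toComplex_ne_zero hunit.ne_zero]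
  have htwo : 2 • quarterAngle p = 0 := by
    rw [two_nsmul, ← neg_eq_iff_add_eq_zero, hneg]
  have hfin : IsOfFinAddOrder (quarterAngle p) :=
    isOfFinAddOrder_iff_nsmul_eq_zero.mpr ⟨2, two_pos, htwo⟩
  have hord : addOrderOf (quarterAngle p) ≤ 2 := addOrderOf_le_of_nsmul_eq_zero two_pos htwo
  have hlower := AddCircle.le_add_order_smul_norm_of_isOfFinAddOrder hfin h0
  rw [nsmul_eq_mul] at hlower
  have : (addOrderOf (quarterAngle p) : ℝ) ≤ 2 := by exact_mod_cast hord
  nlinarith [norm_nonneg (quarterAngle p)]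

/-! ### Sums over the Gaussian integers -/

theorem gaussianInt_sq_norm (z : GaussianInt) :
    ‖(z : ℂ)‖ ^ 2 = (z.re : ℝ) ^ 2 + (z.im : ℝ) ^ 2 := by
  rw [← Complex.normSq_eq_norm_sq, GaussianInt.toComplex_def, Complex.normSq_apply]
  simp only [Complex.add_re, Complex.add_im, Complex.intCast_re, Complex.intCast_im, Complex.mul_re,
    Complex.mul_im, Complex.I_re, Complex.I_im]
  ring

theorem gaussianInt_norm_pos {z : GaussianInt} (hz : z ≠ 0) : 0 < ‖(z : ℂ)‖ :=
  norm_pos_iff.mpr (gaussianInt_toComplex_ne_zero hz)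

theorem gaussianInt_one_le_norm {z : GaussianInt} (hz : z ≠ 0) : 1 ≤ ‖(z : ℂ)‖ := by
  have h : 1 ≤ z.norm := GaussianInt.norm_pos.mpr hz
  rw [← one_le_sq_iff₀ (norm_nonneg _), ← Complex.normSq_eq_norm_sq,
    ← GaussianInt.intCast_real_norm]
  exact_mod_cast h

theorem gaussianInt_norm_eq_one_of_isUnit {u : GaussianInt} (hu : IsUnit u) : ‖(u : ℂ)‖ = 1 := by
  have h : (u.norm : ℝ) = 1 := by
    exact_mod_cast (Zsqrtd.norm_eq_one_iff' (by norm_num) u).mpr hu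
  rw [GaussianInt.intCast_real_norm, Complex.normSq_eq_norm_sq] at h
  exact (pow_eq_one_iff_of_nonneg (norm_nonneg _) two_ne_zero).mp h

theorem two_le_sq_norm_of_prime {p : GaussianInt} (hp : Prime p) : 2 ≤ ‖(p : ℂ)‖ ^ 2 := by
  have hpos : 0 < p.norm := GaussianInt.norm_pos.mpr hp.ne_zero
  have hne : p.norm ≠ 1 := fun h =>
    hp.not_isUnit ((Zsqrtd.norm_eq_one_iff' (by norm_num) p).mp h)
  rw [← Complex.normSq_eq_norm_sq, ← GaussianInt.intCast_real_norm]
  exact_mod_cast (show 2 ≤ p.norm by omega)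

theorem gaussianInt_log_norm_nonneg (z : GaussianInt) : 0 ≤ Real.log ‖(z : ℂ)‖ := by
  rcases eq_or_ne z 0 with rfl | hz
  · simp
  · exact Real.log_nonneg (gaussianInt_one_le_norm hz)

theorem log_norm_mul_norm_rpow_nonneg (z : GaussianInt) (t : ℝ) :
    0 ≤ Real.log ‖(z : ℂ)‖ * ‖(z : ℂ)‖ ^ t :=
  mul_nonneg (gaussianInt_log_norm_nonneg z) (by positivity)

theorem summable_gaussianInt_norm_rpow {r : ℝ} (hr : 2 < r) :
    Summable fun z : GaussianInt => ‖(z : ℂ)‖ ^ (-r) := by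
  let e (z : GaussianInt) : Fin 2 → ℤ := ![z.re, z.im]
  have he : Function.Injective e := fun z w h =>
    Zsqrtd.ext (congrFun h 0) (congrFun h 1)
  have hnorm (z : GaussianInt) : ‖e z‖ ≤ ‖(z : ℂ)‖ := by
    rw [pi_norm_le_iff_of_nonneg (norm_nonneg _), Fin.forall_fin_two]
    rw [← Int.norm_cast_real, ← Int.norm_cast_real]
    constructor
    · simpa [e] using Complex.abs_re_le_norm z
    · simpa [e] using Complex.abs_im_le_norm z
  refine ((EisensteinSeries.summable_one_div_norm_rpow hr).comp_injective he).of_nonneg_of_le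
    (fun z => by positivity) fun z => ?_
  rcases eq_or_ne z 0 with rfl | hz
  · rw [map_zero, norm_zero, Real.zero_rpow (by linarith)]
    exact Real.rpow_nonneg (norm_nonneg _) _
  · have hez : 0 < ‖e z‖ := norm_pos_iff.mpr fun h =>
      hz (Zsqrtd.ext (congrFun h 0) (congrFun h 1))
    exact Real.rpow_le_rpow_of_nonpos hez (hnorm z) (by linarith)

theorem summable_gaussianInt_log_norm_mul_norm_rpow {r : ℝ} (hr : 2 < r) :
    Summable fun z : GaussianInt => Real.log ‖(z : ℂ)‖ * ‖(z : ℂ)‖ ^ (-r) := by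
  set δ := (r - 2) / 2 with hδ
  have hδ0 : 0 < δ := by linarith
  refine ((summable_gaussianInt_norm_rpow (r := r - δ) (by linarith)).mul_left δ⁻¹).of_nonneg_of_le
    (fun z => ?_) fun z => ?_
  all_goals rcases eq_or_ne z 0 with rfl | hz
  · simp
  · exact mul_nonneg (Real.log_nonneg (gaussianInt_one_le_norm hz)) (by positivity)
  · rw [map_zero, norm_zero, Real.log_zero, zero_mul]
    positivity
  · calc Real.log ‖(z : ℂ)‖ * ‖(z : ℂ)‖ ^ (-r)
        ≤ ‖(z : ℂ)‖ ^ δ / δ * ‖(z : ℂ)‖ ^ (-r) := by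
          gcongr
          exact Real.log_le_rpow_div (norm_nonneg _) hδ0
      _ = δ⁻¹ * ‖(z : ℂ)‖ ^ (-(r - δ)) := by
          rw [show -(r - δ) = δ + -r by ring, Real.rpow_add (gaussianInt_norm_pos hz)]
          ring

theorem not_summable_gaussianInt_norm_rpow_neg_two :
    ¬Summable fun z : GaussianInt => ‖(z : ℂ)‖ ^ (-2 : ℝ) := by
  intro h
  let e (q : Σ a : ℕ, Fin (a + 1)) : GaussianInt := ⟨(q.1 : ℤ) + 1, (q.2 : ℕ)⟩
  have he : Function.Injective e := by
    rintro ⟨a, b⟩ ⟨c, d⟩ heq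
    obtain ⟨hac, hbd⟩ := Zsqrtd.mk.inj heq
    obtain rfl : a = c := by exact_mod_cast add_right_cancel hac
    obtain rfl : b = d := Fin.ext (by exact_mod_cast hbd)
    rfl
  have hterm (a : ℕ) (b : Fin (a + 1)) :
      (2 * ((a : ℝ) + 1) ^ 2)⁻¹ ≤ ‖(e ⟨a, b⟩ : ℂ)‖ ^ (-2 : ℝ) := by
    have hb : ((b : ℕ) : ℝ) ≤ a := by exact_mod_cast Nat.lt_succ_iff.mp b.2
    rw [Real.rpow_neg (norm_nonneg _), Real.rpow_two, gaussianInt_sq_norm]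
    simp only [e]
    push_cast
    gcongr
    nlinarith [(b : ℕ).cast_nonneg (α := ℝ)]
  have hharmonic : Summable fun a : ℕ => 2⁻¹ * (1 / ((a + 1 : ℕ) : ℝ)) := by
    refine (h.comp_injective he).sigma.of_nonneg_of_le (fun a => by positivity) fun a => ?_
    calc 2⁻¹ * (1 / ((a + 1 : ℕ) : ℝ))
        = ∑ _b : Fin (a + 1), (2 * ((a : ℝ) + 1) ^ 2)⁻¹ := by
          rw [Finset.sum_const, Finset.card_univ, Fintype.card_fin, nsmul_eq_mul]
          push_cast
          field_simp
      _ ≤ ∑' b : Fin (a + 1), ‖(e ⟨a, b⟩ : ℂ)‖ ^ (-2 : ℝ) := by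
          rw [tsum_fintype]
          exact Finset.sum_le_sum fun b _ => hterm a b
  exact Real.not_summable_one_div_natCast
    ((summable_nat_add_iff 1).mp ((summable_mul_left_iff (by norm_num)).mp hharmonic))

noncomputable instance : NormalizationMonoid GaussianInt :=
  UniqueFactorizationMonoid.strongNormalizationMonoid.toNormalizationMonoid

theorem summable_log_norm_mul_norm_rpow_prime {r : ℝ} (hr : 2 < r) :
    Summable fun p : NormalizedPrime GaussianInt => Real.log ‖(p.1 : ℂ)‖ * ‖(p.1 : ℂ)‖ ^ (-r) :=
  (summable_gaussianInt_log_norm_mul_norm_rpow hr).comp_injective Subtype.val_injective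

/-! ### Hecke L-functions of the Gaussian integers -/

/-- The summand of the Hecke `L`-function of `ℤ[i]` with the Grössencharacter `(z / ‖z‖) ^ (4 * n)`.
It is normalized by `‖z‖ ^ (-s)`, that is, by the norm of `z` to the power `-s / 2`, so that the
edge of absolute convergence is `re s = 2`. -/
noncomputable def heckeTerm (n : ℤ) (s z : ℂ) : ℂ := fourier n (quarterAngle z) * (‖z‖ : ℂ) ^ (-s)

section HeckeTerm

variable (n : ℤ) {s : ℂ}

theorem heckeTerm_zero (hs : s ≠ 0) : heckeTerm n s 0 = 0 := by
  simp [heckeTerm, Complex.zero_cpow (neg_ne_zero.mpr hs)]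

theorem heckeTerm_one : heckeTerm n s 1 = 1 := by
  simp [heckeTerm]

theorem heckeTerm_mul (hs : s ≠ 0) (z w : ℂ) :
    heckeTerm n s (z * w) = heckeTerm n s z * heckeTerm n s w := by
  rcases eq_or_ne z 0 with rfl | hz
  · simp [heckeTerm_zero n hs]
  rcases eq_or_ne w 0 with rfl | hw
  · simp [heckeTerm_zero n hs]
  rw [heckeTerm, heckeTerm, heckeTerm, quarterAngle_mul hz hw, norm_mul, Complex.ofReal_mul,
    Complex.mul_cpow_ofReal_nonneg (norm_nonneg z) (norm_nonneg w), fourier_apply, smul_add,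
    AddCircle.toCircle_add, Circle.coe_mul, fourier_apply, fourier_apply]
  ring

theorem norm_heckeTerm (hs : s.re ≠ 0) (z : ℂ) : ‖heckeTerm n s z‖ = ‖z‖ ^ (-s.re) := by
  rw [heckeTerm, norm_mul, fourier_apply, Circle.norm_coe, one_mul,
    Complex.norm_cpow_eq_rpow_re_of_nonneg (norm_nonneg z) (by simpa using hs), Complex.neg_re]

theorem hasDerivAt_heckeTerm (hs : s ≠ 0) (z : ℂ) :
    HasDerivAt (fun s => heckeTerm n s z) (-Real.log ‖z‖ * heckeTerm n s z) s := by
  have h := ((hasDerivAt_neg s).const_cpow (c := (‖z‖ : ℂ)) (Or.inr (neg_ne_zero.mpr hs))).const_mul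
    (fourier n (quarterAngle z))
  refine h.congr_deriv ?_
  rw [heckeTerm, Complex.ofReal_log (norm_nonneg z)]
  ring

theorem heckeTerm_eq_exp {z : ℂ} (hz : z ≠ 0) :
    heckeTerm n s z =
      Complex.exp (4 * n * (Complex.log z).im * Complex.I - s * (Complex.log z).re) := by
  rw [heckeTerm, fourier_quarterAngle, Complex.log_im, Complex.log_re,
    Complex.cpow_def_of_ne_zero (by simpa using hz), ← Complex.ofReal_log (norm_nonneg z),
    ← Complex.exp_add]
  congr 1
  ring

theorem norm_heckeTerm_sub_one_le {w : ℂ} (hw : ‖w - 1‖ ≤ 1 / 2)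
    (hsmall : (4 * |(n : ℝ)| + ‖s‖) * (3 / 2 * ‖w - 1‖) ≤ 1) :
    ‖heckeTerm n s w - 1‖ ≤ 3 * (4 * |(n : ℝ)| + ‖s‖) * ‖w - 1‖ := by
  have hw0 : w ≠ 0 := by
    rintro rfl
    norm_num at hw
  have hlog : ‖Complex.log w‖ ≤ 3 / 2 * ‖w - 1‖ := by
    simpa using Complex.norm_log_one_add_half_le_self hw
  set E : ℂ := 4 * n * (Complex.log w).im * Complex.I - s * (Complex.log w).re with hE
  have hexp : ‖E‖ ≤ (4 * |(n : ℝ)| + ‖s‖) * (3 / 2 * ‖w - 1‖) :=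
    calc ‖E‖ ≤ 4 * |(n : ℝ)| * |(Complex.log w).im| + ‖s‖ * |(Complex.log w).re| := by
          refine (norm_sub_le _ _).trans_eq ?_
          simp
      _ ≤ 4 * |(n : ℝ)| * ‖Complex.log w‖ + ‖s‖ * ‖Complex.log w‖ := by
          gcongr
          exacts [Complex.abs_im_le_norm _, Complex.abs_re_le_norm _]
      _ ≤ (4 * |(n : ℝ)| + ‖s‖) * (3 / 2 * ‖w - 1‖) := by
          rw [← add_mul]
          gcongr
  rw [heckeTerm_eq_exp n hw0, ← hE]
  linarith [Complex.norm_exp_sub_one_le (hexp.trans hsmall)]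

theorem norm_heckeTerm_sub_le (hs : s.re ≠ 0) {u v : ℂ} (hu : u ≠ 0) (hv : ‖v - u‖ ≤ ‖u‖ / 2)
    (hsmall : (4 * |(n : ℝ)| + ‖s‖) * (3 / 2 * ‖v - u‖) ≤ ‖u‖) :
    ‖heckeTerm n s v - heckeTerm n s u‖ ≤
      3 * (4 * |(n : ℝ)| + ‖s‖) * ‖v - u‖ * ‖u‖ ^ (-s.re - 1) := by
  have hu' : 0 < ‖u‖ := norm_pos_iff.mpr hu
  have hs0 : s ≠ 0 := by
    rintro rfl
    exact hs rfl
  have hratio : ‖v / u - 1‖ = ‖v - u‖ / ‖u‖ := by rw [div_sub_one hu, norm_div]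
  have hone : ‖heckeTerm n s (v / u) - 1‖ ≤ 3 * (4 * |(n : ℝ)| + ‖s‖) * (‖v - u‖ / ‖u‖) := by
    rw [← hratio]
    apply norm_heckeTerm_sub_one_le
    · rw [hratio, div_le_iff₀ hu']
      linarith
    · rw [hratio, ← mul_div_assoc, ← mul_div_assoc]
      exact div_le_one_of_le₀ hsmall hu'.le
  calc ‖heckeTerm n s v - heckeTerm n s u‖
      = ‖u‖ ^ (-s.re) * ‖heckeTerm n s (v / u) - 1‖ := by
        rw [← norm_heckeTerm n hs, ← norm_mul, mul_sub, mul_one, ← heckeTerm_mul n hs0,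
          mul_div_cancel₀ v hu]
    _ ≤ ‖u‖ ^ (-s.re) * (3 * (4 * |(n : ℝ)| + ‖s‖) * (‖v - u‖ / ‖u‖)) := by gcongr
    _ = 3 * (4 * |(n : ℝ)| + ‖s‖) * ‖v - u‖ * ‖u‖ ^ (-s.re - 1) := by
        rw [Real.rpow_sub_one hu'.ne']
        ring

end HeckeTerm

/-- The Hecke `L`-function attached to `heckeTerm n`; for `n = 0` it is four times the Dedekind
zeta function of `ℚ(i)` at `s / 2`. It has this meaning for `2 < re s`. -/
noncomputable def heckeL (n : ℤ) (s : ℂ) : ℂ := ∑' z : GaussianInt, heckeTerm n s z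

section HeckeL

variable (n : ℤ) {s : ℂ}

theorem norm_heckeTerm_gaussianInt_le {r : ℝ} (hr : 0 < r) (hrs : r ≤ s.re) (z : GaussianInt) :
    ‖heckeTerm n s z‖ ≤ ‖(z : ℂ)‖ ^ (-r) := by
  rw [norm_heckeTerm n (hr.trans_le hrs).ne']
  rcases eq_or_ne z 0 with rfl | hz
  · rw [map_zero, norm_zero, Real.zero_rpow (by linarith), Real.zero_rpow (by linarith)]
  · exact Real.rpow_le_rpow_of_exponent_le (gaussianInt_one_le_norm hz) (by linarith)

theorem summable_norm_heckeTerm (hs : 2 < s.re) :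
    Summable fun z : GaussianInt => ‖heckeTerm n s z‖ := by
  simpa only [norm_heckeTerm n (by linarith : s.re ≠ 0)] using summable_gaussianInt_norm_rpow hs

theorem differentiableOn_heckeTerm {r : ℝ} (hr : 0 ≤ r) (z : ℂ) :
    DifferentiableOn ℂ (fun s => heckeTerm n s z) {s | r < s.re} := by
  intro s (hs : r < s.re)
  have hs0 : s ≠ 0 := Complex.ne_zero_of_re_pos (hr.trans_lt hs)
  exact (hasDerivAt_heckeTerm n hs0 z).differentiableAt.differentiableWithinAt

theorem analyticOnNhd_heckeL : AnalyticOnNhd ℂ (heckeL n) {s | 2 < s.re} := by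
  intro s hs
  obtain ⟨r, hr, hrs⟩ := exists_between (show (2 : ℝ) < s.re from hs)
  exact (Complex.differentiableOn_tsum_of_summable_norm (summable_gaussianInt_norm_rpow hr)
    (fun z => differentiableOn_heckeTerm n (by linarith) z) (isOpen_lt_re r)
    fun z w hw => norm_heckeTerm_gaussianInt_le n (by linarith) (le_of_lt hw) z).analyticAt
      ((isOpen_lt_re r).mem_nhds hrs)

theorem hasSum_deriv_heckeL (hs : 2 < s.re) :
    HasSum (fun z : GaussianInt => -Real.log ‖(z : ℂ)‖ * heckeTerm n s z)
      (deriv (heckeL n) s) := by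
  obtain ⟨r, hr, hrs⟩ := exists_between hs
  have h := Complex.hasSum_deriv_of_summable_norm (summable_gaussianInt_norm_rpow hr)
    (fun z => differentiableOn_heckeTerm n (by linarith) z) (isOpen_lt_re r)
    (fun z w hw => norm_heckeTerm_gaussianInt_le n (by linarith) (le_of_lt hw) z) hrs
  have hs0 : s ≠ 0 := Complex.ne_zero_of_re_pos (two_pos.trans hs)
  simp only [(hasDerivAt_heckeTerm n hs0 _).deriv] at h
  exact h

theorem tendsto_heckeTerm_atTop (z : GaussianInt) :
    Tendsto (fun t : ℝ => heckeTerm n t z) atTop (𝓝 (if ‖(z : ℂ)‖ = 1 then 1 else 0)) := by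
  rcases eq_or_ne z 0 with rfl | hz
  · refine tendsto_nhds_of_eventually_eq ?_
    filter_upwards [eventually_ne_atTop 0] with t ht
    simp [heckeTerm_zero n (Complex.ofReal_ne_zero.mpr ht)]
  split_ifs with h1
  · have hunit : IsUnit z := by
      rw [← Zsqrtd.norm_eq_one_iff' (by norm_num), ← @Int.cast_inj ℝ,
        GaussianInt.intCast_real_norm, Complex.normSq_eq_norm_sq, h1]
      norm_num
    simp [heckeTerm, h1, quarterAngle_eq_zero_of_isUnit hunit]
  · have hgt : 1 < ‖(z : ℂ)‖ := lt_of_le_of_ne (gaussianInt_one_le_norm hz) (Ne.symm h1)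
    refine tendsto_zero_iff_norm_tendsto_zero.mpr
      (((tendsto_rpow_atBot_of_base_gt_one _ hgt).comp tendsto_neg_atTop_atBot).congr' ?_)
    filter_upwards [eventually_ne_atTop 0] with t ht
    rw [norm_heckeTerm n (by simpa using ht), Complex.ofReal_re, Function.comp_apply]

theorem tendsto_heckeL_atTop :
    Tendsto (fun t : ℝ => heckeL n t) atTop
      (𝓝 (∑' z : GaussianInt, if ‖(z : ℂ)‖ = 1 then 1 else 0)) := by
  refine tendsto_tsum_of_dominated_convergence
    (summable_gaussianInt_norm_rpow (show (2 : ℝ) < 3 by norm_num)) (tendsto_heckeTerm_atTop n) ?_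
  filter_upwards [eventually_ge_atTop 3] with t ht z
  exact norm_heckeTerm_gaussianInt_le n three_pos (by simpa using ht) z

theorem tsum_norm_eq_one_ne_zero :
    (∑' z : GaussianInt, if ‖(z : ℂ)‖ = 1 then (1 : ℂ) else 0) ≠ 0 := by
  have hle (z : GaussianInt) : (if ‖(z : ℂ)‖ = 1 then (1 : ℝ) else 0) ≤ ‖(z : ℂ)‖ ^ (-3 : ℝ) := by
    split_ifs with h
    · rw [h, Real.one_rpow]
    · positivity
  have hpos (z : GaussianInt) : 0 ≤ if ‖(z : ℂ)‖ = 1 then (1 : ℝ) else 0 := by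
    split_ifs <;> norm_num
  have hsum := (summable_gaussianInt_norm_rpow (by norm_num)).of_nonneg_of_le hpos hle
  have htsum : (∑' z : GaussianInt, if ‖(z : ℂ)‖ = 1 then (1 : ℝ) else 0) ≠ 0 :=
    (hsum.tsum_pos hpos 1 (by simp)).ne'
  simpa only [Complex.ofReal_tsum, apply_ite Complex.ofReal, Complex.ofReal_one,
    Complex.ofReal_zero] using Complex.ofReal_ne_zero.mpr htsum

theorem not_heckeL_eventuallyEq_zero (hs : 2 < s.re) : ¬heckeL n =ᶠ[𝓝 s] 0 := by
  intro h
  have hpre : IsPreconnected {s : ℂ | 2 < s.re} := (convex_halfSpace_re_gt 2).isPreconnected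
  have hzero := (analyticOnNhd_heckeL n).eqOn_zero_of_preconnected_of_eventuallyEq_zero hpre hs h
  refine tsum_norm_eq_one_ne_zero (tendsto_nhds_unique (tendsto_heckeL_atTop n) ?_)
  refine tendsto_nhds_of_eventually_eq ?_
  filter_upwards [eventually_gt_atTop 2] with t ht
  exact hzero (show 2 < (t : ℂ).re from ht)

end HeckeL

/-! ### Continuation past the edge of convergence -/

/-- The series `∑ z, (f (α * z + β) - f (α * z))` over `ℤ[i]` for `f = heckeTerm n s`. Cancellation
between the two terms makes it converge for `1 < re s`, so it serves to continue `heckeL`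
analytically. -/
noncomputable def heckeShift (n : ℤ) (α β : GaussianInt) (s : ℂ) : ℂ :=
  ∑' z : GaussianInt, (heckeTerm n s (α * z + β) - heckeTerm n s (α * z))

theorem tendsto_gaussianInt_norm_cofinite :
    Tendsto (fun z : GaussianInt => ‖(z : ℂ)‖) cofinite atTop := by
  have h := (summable_gaussianInt_norm_rpow (show (2 : ℝ) < 3 by norm_num)).tendsto_cofinite_zero
  refine tendsto_atTop.mpr fun b => ?_
  have hb : 0 < max b 1 ^ (-3 : ℝ) := by positivity
  filter_upwards [h.eventually_lt_const hb, eventually_cofinite_ne 0] with z hz hz0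
  rw [Real.rpow_lt_rpow_iff_of_neg (gaussianInt_norm_pos hz0) (by positivity) (by norm_num)] at hz
  exact (le_max_left b 1).trans hz.le

section Continuation

variable (n : ℤ) {α : GaussianInt}

theorem eventually_norm_heckeTerm_shift_le (hα : α ≠ 0) (β : GaussianInt) {r : ℝ} (hr : 0 < r)
    (B : ℝ) :
    ∃ C, ∀ᶠ z : GaussianInt in cofinite, ∀ s : ℂ, r ≤ s.re → ‖s‖ ≤ B →
      ‖heckeTerm n s (α * z + β) - heckeTerm n s (α * z)‖ ≤ C * ‖(z : ℂ)‖ ^ (-(r + 1)) := by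
  set A := 4 * |(n : ℝ)| + B
  have hαz := tendsto_gaussianInt_norm_cofinite.const_mul_atTop (gaussianInt_norm_pos hα)
  refine ⟨3 * A * ‖(β : ℂ)‖ * ‖(α : ℂ)‖ ^ (-(r + 1)), ?_⟩
  filter_upwards [hαz.eventually_ge_atTop 1, hαz.eventually_ge_atTop (2 * ‖(β : ℂ)‖),
    hαz.eventually_ge_atTop (A * (3 / 2 * ‖(β : ℂ)‖))] with z h1 h2 hA s hrs hsB
  rw [← norm_mul] at h1 h2 hA
  have hsA : 4 * |(n : ℝ)| + ‖s‖ ≤ A := by simp only [A]; linarith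
  have hA0 : 0 ≤ A := le_trans (by positivity) hsA
  have hz0 : (α * z : ℂ) ≠ 0 := norm_pos_iff.mp (by linarith)
  have hsub : ‖(α * z + β - α * z : ℂ)‖ = ‖(β : ℂ)‖ := by rw [add_sub_cancel_left]
  have hsmall : (4 * |(n : ℝ)| + ‖s‖) * (3 / 2 * ‖(α * z + β - α * z : ℂ)‖) ≤ ‖(α * z : ℂ)‖ := by
    rw [hsub]
    exact le_trans (by gcongr) hA
  calc ‖heckeTerm n s (α * z + β) - heckeTerm n s (α * z)‖
      ≤ 3 * (4 * |(n : ℝ)| + ‖s‖) * ‖(α * z + β - α * z : ℂ)‖ * ‖(α * z : ℂ)‖ ^ (-s.re - 1) :=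
        norm_heckeTerm_sub_le n (by linarith) hz0 (by linarith) hsmall
    _ ≤ 3 * A * ‖(β : ℂ)‖ * ‖(α * z : ℂ)‖ ^ (-(r + 1)) := by
        rw [hsub]
        gcongr
        linarith
    _ = 3 * A * ‖(β : ℂ)‖ * ‖(α : ℂ)‖ ^ (-(r + 1)) * ‖(z : ℂ)‖ ^ (-(r + 1)) := by
        rw [norm_mul, Real.mul_rpow (norm_nonneg _) (norm_nonneg _)]
        ring

theorem analyticOnNhd_heckeShift (hα : α ≠ 0) (β : GaussianInt) :
    AnalyticOnNhd ℂ (heckeShift n α β) {s | 1 < s.re} := by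
  have hsum : SummableLocallyUniformlyOn (fun (z : GaussianInt) s =>
      heckeTerm n s (α * z + β) - heckeTerm n s (α * z)) {s | 1 < s.re} := by
    refine .of_locally_bounded_eventually (isOpen_lt_re 1) fun K hK hKc => ?_
    rcases K.eq_empty_or_nonempty with rfl | hne
    · exact ⟨0, summable_zero, by simp⟩
    obtain ⟨s₀, hs₀, hmin⟩ := hKc.exists_isMinOn hne Complex.continuous_re.continuousOn
    obtain ⟨B, hB⟩ := hKc.isBounded.exists_norm_le
    have h1 : 1 < s₀.re := hK hs₀
    obtain ⟨C, hC⟩ := eventually_norm_heckeTerm_shift_le n hα β (zero_lt_one.trans h1) B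
    exact ⟨_, (summable_gaussianInt_norm_rpow (by linarith)).mul_left C,
      hC.mono fun z hz s hs => hz s (hmin hs) (hB s hs)⟩
  refine (hsum.differentiableOn (isOpen_lt_re 1) fun z s hs => ?_).analyticOnNhd (isOpen_lt_re 1)
  have hmem := (isOpen_lt_re 1).mem_nhds hs
  exact ((differentiableOn_heckeTerm n zero_le_one _).differentiableAt hmem).sub
    ((differentiableOn_heckeTerm n zero_le_one _).differentiableAt hmem)

theorem heckeL_mul_one_sub_eq_sum_heckeShift {ι : Type*} [Fintype ι]
    {ρ : ι → GaussianInt} (hρ : Function.Bijective fun q : ι × GaussianInt => α * q.2 + ρ q.1)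
    {s : ℂ} (hs : 2 < s.re) :
    heckeL n s * (1 - Fintype.card ι * heckeTerm n s α) = ∑ i, heckeShift n α (ρ i) s := by
  have hs0 : s ≠ 0 := Complex.ne_zero_of_re_pos (two_pos.trans hs)
  have hf : Summable fun z : GaussianInt => heckeTerm n s z :=
    (summable_norm_heckeTerm n hs).of_norm
  let e := Equiv.ofBijective _ hρ
  have he (q : ι × GaussianInt) : (e q : ℂ) = α * q.2 + ρ q.1 := by simp [e]
  have hfe : Summable fun q : ι × GaussianInt => heckeTerm n s (α * q.2 + ρ q.1) := by
    simpa only [← he, Function.comp_def] using e.summable_iff.mpr hf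
  have hL : heckeL n s = ∑ i, ∑' z : GaussianInt, heckeTerm n s (α * z + ρ i) := by
    rw [heckeL, ← e.tsum_eq]
    simp only [he]
    rw [hfe.tsum_prod, tsum_fintype]
  have hmul (z : GaussianInt) : heckeTerm n s (α * z) = heckeTerm n s α * heckeTerm n s z :=
    heckeTerm_mul n hs0 _ _
  have hshift (i : ι) : heckeShift n α (ρ i) s =
      ∑' z : GaussianInt, heckeTerm n s (α * z + ρ i) - heckeTerm n s α * heckeL n s := by
    rw [heckeShift, (hfe.prod_factor i).tsum_sub]
    · simp only [hmul, tsum_mul_left, heckeL]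
    · simpa only [hmul] using hf.mul_left _
  simp only [hshift, Finset.sum_sub_distrib, ← hL, Finset.sum_const, Finset.card_univ,
    nsmul_eq_mul]
  ring

end Continuation

theorem bijective_two_add_i_mul_add : Function.Bijective fun q : Fin 5 × GaussianInt =>
    (⟨2, 1⟩ : GaussianInt) * q.2 + ((q.1 : ℕ) : ℤ) := by
  constructor
  · rintro ⟨⟨r, hr⟩, ⟨x, y⟩⟩ ⟨⟨r', hr'⟩, ⟨x', y'⟩⟩ h
    simp only [Zsqrtd.ext_iff, Zsqrtd.re_add, Zsqrtd.re_mul, Zsqrtd.im_add, Zsqrtd.im_mul,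
      Zsqrtd.re_intCast, Zsqrtd.im_intCast] at h
    simp only [Prod.mk.injEq, Zsqrtd.mk.injEq, Fin.mk.injEq]
    omega
  · rintro ⟨u, v⟩
    refine ⟨⟨⟨((u - 2 * v) % 5).toNat, by omega⟩,
      ⟨v - 2 * ((2 * v - u + (u - 2 * v) % 5) / 5), (2 * v - u + (u - 2 * v) % 5) / 5⟩⟩, ?_⟩
    simp only [Zsqrtd.ext_iff, Zsqrtd.re_add, Zsqrtd.re_mul, Zsqrtd.im_add, Zsqrtd.im_mul,
      Zsqrtd.re_intCast, Zsqrtd.im_intCast]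
    omega

theorem norm_two_add_i : ‖((⟨2, 1⟩ : GaussianInt) : ℂ)‖ = √5 := by
  rw [← Real.sqrt_sq (norm_nonneg _), gaussianInt_sq_norm]
  norm_num

theorem not_isOfFinAddOrder_quarterAngle_two_add_i :
    ¬IsOfFinAddOrder (quarterAngle ((⟨2, 1⟩ : GaussianInt) : ℂ)) := by
  refine not_isOfFinAddOrder_quarterAngle ⟨⟨1, -1⟩, -1, by decide⟩ fun h => ?_
  have hnorm := gaussianInt_norm_eq_one_of_isUnit h
  rw [norm_two_add_i, Real.sqrt_eq_one] at hnorm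
  norm_num at hnorm

/-- The factor `1 - N(α) f(α)` with `f = heckeTerm n s` and `α = 2 + i` of norm `5`, which produces
the analytic continuation of `heckeL n`. -/
noncomputable def heckeFactor (n : ℤ) (s : ℂ) : ℂ :=
  1 - 5 * heckeTerm n s (⟨2, 1⟩ : GaussianInt)

/-- The meromorphic continuation of `heckeL n` to the half-plane `1 < re s`, obtained by comparing
the sum over `ℤ[i]` with the sums over the five residue classes modulo `2 + i`. -/
noncomputable def heckeContinuation (n : ℤ) (s : ℂ) : ℂ :=
  (∑ i : Fin 5, heckeShift n ⟨2, 1⟩ ((i : ℕ) : ℤ) s) / heckeFactor n s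

/-- The order of vanishing of the continued `heckeL n` at the edge `s = 2` of absolute
convergence; it is negative at a pole. -/
noncomputable def heckeOrder (n : ℤ) : ℤ := (meromorphicOrderAt (heckeContinuation n) 2).untop₀

section Order

variable (n : ℤ)

theorem analyticAt_heckeFactor_two : AnalyticAt ℂ (heckeFactor n) 2 :=
  analyticAt_const.sub (analyticAt_const.mul
    ((differentiableOn_heckeTerm n zero_le_one _).analyticAt
      ((isOpen_lt_re 1).mem_nhds (by norm_num))))

theorem heckeFactor_two :
    heckeFactor n 2 = 1 - fourier n (quarterAngle ((⟨2, 1⟩ : GaussianInt) : ℂ)) := by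
  have hpow : ((√5 : ℝ) : ℂ) ^ (-2 : ℂ) = 1 / 5 := by
    rw [Complex.cpow_neg, Complex.cpow_ofNat, ← Complex.ofReal_pow, Real.sq_sqrt (by norm_num)]
    norm_num
  rw [heckeFactor, heckeTerm, norm_two_add_i, hpow]
  ring

theorem heckeFactor_two_ne_zero (hn : n ≠ 0) : heckeFactor n 2 ≠ 0 := by
  rw [heckeFactor_two, sub_ne_zero, fourier_apply]
  intro h
  refine not_isOfFinAddOrder_quarterAngle_two_add_i
    ((isOfFinAddOrder_iff_zsmul_eq_zero).mpr ⟨n, hn, ?_⟩)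
  exact AddCircle.injective_toCircle (Fact.out : 0 < π / 2).ne'
    (by rw [AddCircle.toCircle_zero]; exact Circle.ext h.symm)

theorem meromorphicOrderAt_heckeFactor_zero : meromorphicOrderAt (heckeFactor 0) 2 = 1 := by
  have hderiv : HasDerivAt (heckeFactor 0) (Real.log √5) 2 := by
    refine (((hasDerivAt_heckeTerm 0 two_ne_zero _).const_mul 5).const_sub 1).congr_deriv ?_
    have h := heckeFactor_two 0
    rw [fourier_zero, sub_self, heckeFactor, sub_eq_zero] at h
    rw [mul_left_comm, ← h, norm_two_add_i]
    ring
  rw [(analyticAt_heckeFactor_two 0).meromorphicOrderAt_eq,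
    (analyticAt_heckeFactor_two 0).analyticOrderAt_eq_one_of_zero_deriv_ne_zero]
  · rfl
  · rw [heckeFactor_two, fourier_zero, sub_self]
  · rw [hderiv.deriv, Complex.ofReal_ne_zero]
    exact (Real.log_pos (by rw [Real.lt_sqrt zero_le_one]; norm_num)).ne'

theorem heckeFactor_ne_zero {s : ℂ} (hs : 2 < s.re) : heckeFactor n s ≠ 0 := by
  have hlt : ‖5 * heckeTerm n s (⟨2, 1⟩ : GaussianInt)‖ < 1 := by
    rw [norm_mul, norm_heckeTerm n (by linarith), norm_two_add_i]
    have h5 : 1 < √5 := by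
      rw [Real.lt_sqrt zero_le_one]
      norm_num
    calc ‖(5 : ℂ)‖ * √5 ^ (-s.re) < 5 * √5 ^ (-2 : ℝ) := by
          rw [RCLike.norm_ofNat]
          gcongr
          exact Real.rpow_lt_rpow_of_exponent_lt h5 (neg_lt_neg hs)
      _ = 1 := by
          rw [Real.rpow_neg (Real.sqrt_nonneg 5), Real.rpow_two, Real.sq_sqrt (by norm_num)]
          norm_num
  rw [heckeFactor, sub_ne_zero]
  intro h
  rw [← h, norm_one] at hlt
  exact hlt.false

theorem heckeContinuation_eq_heckeL {s : ℂ} (hs : 2 < s.re) :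
    heckeContinuation n s = heckeL n s := by
  rw [heckeContinuation, div_eq_iff (heckeFactor_ne_zero n hs),
    ← heckeL_mul_one_sub_eq_sum_heckeShift n bijective_two_add_i_mul_add hs, heckeFactor,
    Fintype.card_fin]
  norm_num

theorem analyticAt_sum_heckeShift_two :
    AnalyticAt ℂ (fun s => ∑ i : Fin 5, heckeShift n ⟨2, 1⟩ ((i : ℕ) : ℤ) s) 2 :=
  Finset.univ.analyticAt_fun_sum fun i _ =>
    analyticOnNhd_heckeShift n (by decide) _ 2 (show 1 < (2 : ℂ).re by norm_num)

theorem meromorphicAt_heckeContinuation_two : MeromorphicAt (heckeContinuation n) 2 :=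
  (analyticAt_sum_heckeShift_two n).meromorphicAt.fun_div
    (analyticAt_heckeFactor_two n).meromorphicAt

theorem heckeContinuation_eventuallyEq {t : ℝ} (ht : 2 < t) :
    heckeContinuation n =ᶠ[𝓝 (t : ℂ)] heckeL n := by
  filter_upwards [(isOpen_lt_re 2).mem_nhds (show 2 < (t : ℂ).re from ht)] with s hs
  exact heckeContinuation_eq_heckeL n hs

theorem meromorphicOrderAt_heckeContinuation_ne_top :
    meromorphicOrderAt (heckeContinuation n) 2 ≠ ⊤ := by
  rw [Ne, meromorphicOrderAt_eq_top_iff, ← eventually_eventually_nhdsWithin]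
  intro h
  obtain ⟨t, ⟨hzero, hne⟩, ht⟩ :=
    ((tendsto_ofReal_two.eventually (h.and self_mem_nhdsWithin)).and self_mem_nhdsWithin).exists
  rw [isOpen_compl_singleton.nhdsWithin_eq hne] at hzero
  exact not_heckeL_eventuallyEq_zero n (show 2 < (t : ℂ).re from ht)
    ((heckeContinuation_eventuallyEq n ht).symm.trans hzero)

theorem coe_heckeOrder : (heckeOrder n : WithTop ℤ) = meromorphicOrderAt (heckeContinuation n) 2 :=
  WithTop.coe_untop₀_of_ne_top (meromorphicOrderAt_heckeContinuation_ne_top n)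

theorem heckeOrder_nonneg (hn : n ≠ 0) : 0 ≤ heckeOrder n := by
  rw [← WithTop.coe_le_coe, coe_heckeOrder, WithTop.coe_zero]
  exact ((analyticAt_sum_heckeShift_two n).fun_div (analyticAt_heckeFactor_two n)
    (heckeFactor_two_ne_zero n hn)).meromorphicOrderAt_nonneg

theorem neg_one_le_heckeOrder_zero : -1 ≤ heckeOrder 0 := by
  have hdiv : (heckeOrder 0 : WithTop ℤ) = meromorphicOrderAt
      (fun s => ∑ i : Fin 5, heckeShift 0 ⟨2, 1⟩ ((i : ℕ) : ℤ) s) 2 - 1 := by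
    rw [coe_heckeOrder, ← meromorphicOrderAt_heckeFactor_zero]
    exact fun_meromorphicOrderAt_div (analyticAt_sum_heckeShift_two 0).meromorphicAt
      (analyticAt_heckeFactor_two 0).meromorphicAt
  have hnum := (analyticAt_sum_heckeShift_two 0).meromorphicOrderAt_nonneg
  revert hdiv hnum
  cases meromorphicOrderAt (fun s => ∑ i : Fin 5, heckeShift 0 ⟨2, 1⟩ ((i : ℕ) : ℤ) s) 2 with
  | top => simp
  | coe a =>
    norm_cast
    omega

end Order

/-! ### Sums over Gaussian primes -/

/-- `heckeTerm n s` on `ℤ[i]`, bundled as a multiplicative map to be fed to the Euler product. -/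
noncomputable def heckeTermHom (n : ℤ) {s : ℂ} (hs : s ≠ 0) : GaussianInt →*₀ ℂ where
  toFun z := heckeTerm n s z
  map_zero' := by rw [map_zero, heckeTerm_zero n hs]
  map_one' := by rw [map_one, heckeTerm_one]
  map_mul' z w := by rw [map_mul, heckeTerm_mul n hs]

/-- The sum of `heckeTerm n s p`, weighted by `log ‖p‖`, over the Gaussian primes up to units. Up to
a bounded error it is minus the logarithmic derivative of `heckeL n`. -/
noncomputable def heckePrimeSum (n : ℤ) (s : ℂ) : ℂ :=
  ∑' p : NormalizedPrime GaussianInt, Real.log ‖(p.1 : ℂ)‖ * heckeTerm n s p.1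

section PrimeSum

variable (n : ℤ) {s : ℂ}

theorem deriv_heckeL (hs : 2 < s.re) :
    deriv (heckeL n) s = -(heckeL n s * ∑' p : NormalizedPrime GaussianInt,
      Real.log ‖(p.1 : ℂ)‖ * (heckeTerm n s p.1 / (1 - heckeTerm n s p.1))) := by
  have hs0 : s ≠ 0 := Complex.ne_zero_of_re_pos (two_pos.trans hs)
  have hlog : Summable fun z : GaussianInt => Real.log ‖(z : ℂ)‖ * ‖heckeTermHom n hs0 z‖ := by
    have hnorm (z : GaussianInt) : ‖heckeTermHom n hs0 z‖ = ‖(z : ℂ)‖ ^ (-s.re) :=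
      norm_heckeTerm n (by linarith) z
    simpa only [hnorm] using summable_gaussianInt_log_norm_mul_norm_rpow hs
  have hmul (a b : GaussianInt) (ha : a ≠ 0) (hb : b ≠ 0) :
      Real.log ‖((a * b : GaussianInt) : ℂ)‖ = Real.log ‖(a : ℂ)‖ + Real.log ‖(b : ℂ)‖ := by
    rw [map_mul, norm_mul, Real.log_mul (gaussianInt_norm_pos ha).ne' (gaussianInt_norm_pos hb).ne']
  have hunit (u : GaussianInt) (hu : IsUnit u) : Real.log ‖(u : ℂ)‖ = 0 := by
    rw [gaussianInt_norm_eq_one_of_isUnit hu, Real.log_one]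
  rw [← (hasSum_deriv_heckeL n hs).tsum_eq]
  simp only [neg_mul, tsum_neg]
  exact congrArg _ (tsum_additive_mul_eq_tsum_mul_tsum_prime (F := heckeTermHom n hs0) hmul hunit
    gaussianInt_log_norm_nonneg (summable_norm_heckeTerm n hs).of_norm hlog)

theorem norm_heckeTerm_prime_le_half (hs : 2 < s.re) {p : GaussianInt} (hp : Prime p) :
    ‖heckeTerm n s p‖ ≤ 1 / 2 := by
  refine (norm_heckeTerm_gaussianInt_le n two_pos hs.le p).trans ?_
  rw [Real.rpow_neg (norm_nonneg _), Real.rpow_two, ← one_div]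
  exact one_div_le_one_div_of_le two_pos (two_le_sq_norm_of_prime hp)

theorem norm_log_mul_heckeTerm_div_one_sub_sub_le (hs : 2 < s.re) {p : GaussianInt}
    (hp : Prime p) :
    ‖Real.log ‖(p : ℂ)‖ * (heckeTerm n s p / (1 - heckeTerm n s p)) -
        Real.log ‖(p : ℂ)‖ * heckeTerm n s p‖ ≤
      2 * (Real.log ‖(p : ℂ)‖ * ‖(p : ℂ)‖ ^ (-4 : ℝ)) := by
  have hlog := gaussianInt_log_norm_nonneg p
  calc _ = Real.log ‖(p : ℂ)‖ *
          ‖heckeTerm n s p / (1 - heckeTerm n s p) - heckeTerm n s p‖ := by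
        rw [← mul_sub, norm_mul, Complex.norm_real, Real.norm_of_nonneg hlog]
    _ ≤ Real.log ‖(p : ℂ)‖ * (2 * ‖heckeTerm n s p‖ ^ 2) := by
        gcongr
        exact norm_div_one_sub_sub_self_le (norm_heckeTerm_prime_le_half n hs hp)
    _ ≤ Real.log ‖(p : ℂ)‖ * (2 * (‖(p : ℂ)‖ ^ (-2 : ℝ)) ^ 2) := by
        gcongr
        exact norm_heckeTerm_gaussianInt_le n two_pos hs.le p
    _ = 2 * (Real.log ‖(p : ℂ)‖ * ‖(p : ℂ)‖ ^ (-4 : ℝ)) := by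
        rw [← Real.rpow_mul_natCast (norm_nonneg _), mul_left_comm]
        norm_num

theorem norm_logDeriv_heckeL_add_heckePrimeSum_le (hs : 2 < s.re) (hL : heckeL n s ≠ 0) :
    ‖logDeriv (heckeL n) s + heckePrimeSum n s‖ ≤
      ∑' p : NormalizedPrime GaussianInt, 2 * (Real.log ‖(p.1 : ℂ)‖ * ‖(p.1 : ℂ)‖ ^ (-4 : ℝ)) := by
  have hbound (p : NormalizedPrime GaussianInt) :=
    norm_log_mul_heckeTerm_div_one_sub_sub_le n hs p.2.1
  have hsumBound : Summable fun p : NormalizedPrime GaussianInt =>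
      2 * (Real.log ‖(p.1 : ℂ)‖ * ‖(p.1 : ℂ)‖ ^ (-4 : ℝ)) :=
    (summable_log_norm_mul_norm_rpow_prime (by norm_num)).mul_left 2
  have hsumPrime : Summable fun p : NormalizedPrime GaussianInt =>
      (Real.log ‖(p.1 : ℂ)‖ * heckeTerm n s p.1 : ℂ) := by
    refine Summable.of_norm ((summable_log_norm_mul_norm_rpow_prime hs).congr fun p => ?_)
    rw [norm_mul, Complex.norm_real, Real.norm_of_nonneg (gaussianInt_log_norm_nonneg p.1),
      norm_heckeTerm n (by linarith)]
  have hsumEuler : Summable fun p : NormalizedPrime GaussianInt =>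
      (Real.log ‖(p.1 : ℂ)‖ * (heckeTerm n s p.1 / (1 - heckeTerm n s p.1)) : ℂ) := by
    simpa using (Summable.of_norm_bounded hsumBound hbound).add hsumPrime
  rw [← norm_neg, logDeriv_apply, deriv_heckeL n hs, neg_div, mul_div_cancel_left₀ _ hL, neg_add,
    neg_neg, ← sub_eq_add_neg, heckePrimeSum, ← hsumEuler.tsum_sub hsumPrime]
  exact tsum_of_norm_bounded hsumBound.hasSum hbound

end PrimeSum

section

variable (n : ℤ)

theorem heckeTerm_ofReal (t : ℝ) (z : ℂ) :
    heckeTerm n t z = (‖z‖ ^ (-t) : ℝ) * fourier n (quarterAngle z) := by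
  rw [heckeTerm, Complex.ofReal_cpow (norm_nonneg z), Complex.ofReal_neg, mul_comm]

theorem heckeL_zero_ofReal (t : ℝ) :
    heckeL 0 t = (∑' z : GaussianInt, ‖(z : ℂ)‖ ^ (-t) : ℝ) := by
  simp only [heckeL, heckeTerm_ofReal, fourier_zero, mul_one, Complex.ofReal_tsum]

theorem heckePrimeSum_ofReal (t : ℝ) :
    heckePrimeSum n t = ∑' p : NormalizedPrime GaussianInt,
      (Real.log ‖(p.1 : ℂ)‖ * ‖(p.1 : ℂ)‖ ^ (-t) : ℝ) * (fourier n (quarterAngle p.1) : ℂ) := by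
  simp only [heckePrimeSum, heckeTerm_ofReal, Complex.ofReal_mul, mul_assoc]

theorem heckeOrder_zero_neg : heckeOrder 0 < 0 := by
  by_contra! h
  rw [← WithTop.coe_le_coe, coe_heckeOrder, WithTop.coe_zero] at h
  obtain ⟨c, hc⟩ :=
    tendsto_nhds_of_meromorphicOrderAt_nonneg (meromorphicAt_heckeContinuation_two 0) h
  refine not_summable_gaussianInt_norm_rpow_neg_two (summable_of_tendsto_tsum
    (l := 𝓝[>] (2 : ℝ)) (f := fun t (z : GaussianInt) => ‖(z : ℂ)‖ ^ (-t))
    (g := fun z : GaussianInt => ‖(z : ℂ)‖ ^ (-2 : ℝ)) (c := c.re)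
    (fun t z => by positivity) ?_ (fun z => ?_) ?_)
  · filter_upwards [self_mem_nhdsWithin] with t ht
    exact summable_gaussianInt_norm_rpow ht
  · exact ((Real.continuousAt_const_rpow' (by norm_num)).tendsto.comp
      (continuous_neg.tendsto 2)).mono_left nhdsWithin_le_nhds
  · refine ((Complex.continuous_re.tendsto c).comp (hc.comp tendsto_ofReal_two)).congr' ?_
    filter_upwards [self_mem_nhdsWithin] with t ht
    rw [Function.comp_apply, Function.comp_apply,
      heckeContinuation_eq_heckeL 0 (show 2 < (t : ℂ).re from ht), heckeL_zero_ofReal,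
      Complex.ofReal_re]

theorem tendsto_sub_two_mul_heckePrimeSum :
    Tendsto (fun t : ℝ => (t - 2) * heckePrimeSum n t) (𝓝[>] 2) (𝓝 (-heckeOrder n)) := by
  have htop := meromorphicOrderAt_heckeContinuation_ne_top n
  have hmer := meromorphicAt_heckeContinuation_two n
  have hlog := (tendsto_sub_mul_logDeriv hmer htop).comp tendsto_ofReal_two
  have hne := tendsto_ofReal_two.eventually
    ((meromorphicOrderAt_ne_top_iff_eventually_ne_zero hmer).mp htop)
  have herr : Tendsto (fun t : ℝ => (t - 2) * (logDeriv (heckeL n) t + heckePrimeSum n t))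
      (𝓝[>] 2) (𝓝 0) := by
    refine (tendsto_sub_nhds_zero_iff.mpr (tendsto_ofReal_two.mono_right
      nhdsWithin_le_nhds)).zero_mul_isBoundedUnder_le
        ⟨_, eventually_map.mpr ((hne.and self_mem_nhdsWithin).mono fun t ht =>
          norm_logDeriv_heckeL_add_heckePrimeSum_le n (show 2 < (t : ℂ).re from ht.2)
            (heckeContinuation_eq_heckeL n (show 2 < (t : ℂ).re from ht.2) ▸ ht.1))⟩
  rw [← zero_sub]
  refine (herr.sub hlog).congr' ?_
  filter_upwards [self_mem_nhdsWithin] with t ht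
  rw [Function.comp_apply,
    (logDeriv_congr_nhds (heckeContinuation_eventuallyEq n ht)).self_of_nhds]
  ring

theorem three_mul_heckeOrder_zero_le :
    3 * heckeOrder 0 + 4 * heckeOrder n + heckeOrder (2 * n) ≤ 0 := by
  have hlim (m : ℤ) : Tendsto (fun t : ℝ => (t - 2) * (heckePrimeSum m t).re) (𝓝[>] 2)
      (𝓝 (-heckeOrder m)) := by
    have h := (Complex.continuous_re.tendsto _).comp (tendsto_sub_two_mul_heckePrimeSum m)
    rw [Complex.neg_re, Complex.intCast_re] at h
    refine h.congr fun t => ?_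
    rw [Function.comp_apply, ← Complex.ofReal_ofNat, ← Complex.ofReal_sub, Complex.re_ofReal_mul]
  have hnonneg := ge_of_tendsto ((((hlim 0).const_mul 3).add ((hlim n).const_mul 4)).add
    (hlim (2 * n))) (b := 0) <| by
      filter_upwards [self_mem_nhdsWithin] with t ht
      have h := three_mul_re_tsum_add_four_mul_re_tsum_add_re_tsum_fourier_nonneg
        (fun p : NormalizedPrime GaussianInt => log_norm_mul_norm_rpow_nonneg p.1 (-t))
        (summable_log_norm_mul_norm_rpow_prime ht) n fun p => quarterAngle p.1
      simp only [← heckePrimeSum_ofReal] at h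
      nlinarith [mul_nonneg (sub_nonneg.mpr (le_of_lt ht)) h]
  have h : (3 * heckeOrder 0 + 4 * heckeOrder n + heckeOrder (2 * n) : ℝ) ≤ 0 := by linarith
  exact_mod_cast h

theorem heckeOrder_eq : heckeOrder n = if n = 0 then -1 else 0 := by
  split_ifs with hn
  · have := neg_one_le_heckeOrder_zero
    have := heckeOrder_zero_neg
    subst hn
    omega
  · have := three_mul_heckeOrder_zero_le n
    have := neg_one_le_heckeOrder_zero
    have := heckeOrder_nonneg n hn
    have := heckeOrder_nonneg (2 * n) (by omega)
    omega

end

theorem denseRange_quarterAngle_normalizedPrime :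
    DenseRange fun p : NormalizedPrime GaussianInt => quarterAngle p.1 := by
  refine denseRange_of_tendsto_fourier (l := 𝓝[>] (2 : ℝ))
    (w := fun t p => (t - 2) * (Real.log ‖(p.1 : ℂ)‖ * ‖(p.1 : ℂ)‖ ^ (-t))) ?_ ?_ fun n => ?_
  · filter_upwards [self_mem_nhdsWithin] with t ht p
    exact mul_nonneg (sub_nonneg.mpr (le_of_lt ht)) (log_norm_mul_norm_rpow_nonneg p.1 (-t))
  · filter_upwards [self_mem_nhdsWithin] with t ht
    exact (summable_log_norm_mul_norm_rpow_prime ht).mul_left _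
  · have h := tendsto_sub_two_mul_heckePrimeSum n
    simp only [heckePrimeSum_ofReal, ← tsum_mul_left, heckeOrder_eq] at h
    convert h using 2
    · simp [mul_assoc]
    · split_ifs <;> simp

/-! ### Lattice points on a circle -/

theorem coe_latticeTheta (u : ℤ × ℤ) :
    (latticeTheta u : AddCircle (π / 2)) = quarterAngle (⟨u.1, u.2⟩ : GaussianInt) := by
  apply coe_quarter_eq_of_coe_angle_eq
  rw [latticeTheta, GaussianInt.toComplex_def]
  split_ifs <;> simp

theorem exists_abs_sub_lt_of_norm_coe_lt {θ ε : ℝ} (h : ‖(θ : AddCircle (π / 2))‖ < ε) :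
    ∃ t : Fin 4, ∃ j : ℤ, |θ - (t : ℝ) * π / 2 - 2 * π * j| < ε := by
  rw [AddCircle.norm_eq] at h
  set m := round ((π / 2)⁻¹ * θ)
  have ht : (m % 4).toNat < 4 := by omega
  refine ⟨⟨(m % 4).toNat, ht⟩, m / 4, ?_⟩
  have hm : (m : ℝ) = ((m % 4).toNat : ℝ) + 4 * ((m / 4 : ℤ) : ℝ) := by
    have : m = ((m % 4).toNat : ℤ) + 4 * (m / 4) := by omega
    exact_mod_cast this
  convert h using 2
  rw [hm]
  ring

theorem mem_latticeCircle {n : ℕ} {u : ℤ × ℤ} :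
    u ∈ latticeCircle n ↔ u.1 ^ 2 + u.2 ^ 2 = (n : ℤ) := by
  simp only [latticeCircle, Finset.mem_filter, Finset.mem_product, Finset.mem_Icc,
    and_iff_right_iff_imp]
  intro h
  have abs_le_of_sq_le {a : ℤ} (ha : a ^ 2 ≤ n) : -(n : ℤ) ≤ a ∧ a ≤ n :=
    abs_le.mp ((Int.le_self_sq _).trans (by rwa [sq_abs]))
  exact ⟨abs_le_of_sq_le (by linarith [sq_nonneg u.2]),
    abs_le_of_sq_le (by linarith [sq_nonneg u.1])⟩

theorem gaussianInt_norm_mk (u : ℤ × ℤ) :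
    (⟨u.1, u.2⟩ : GaussianInt).norm = u.1 ^ 2 + u.2 ^ 2 := by
  rw [Zsqrtd.norm_def]
  ring

theorem lt_latticeR_of_injective {n k : ℕ} {f : Fin (k + 1) → GaussianInt}
    (hf : Function.Injective f) (hn : ∀ i, (f i).norm = n) : k < latticeR n := by
  have hinj : Function.Injective fun i => ((f i).re, (f i).im) := fun i j h =>
    hf (Zsqrtd.ext (congrArg Prod.fst h) (congrArg Prod.snd h))
  rw [latticeR, Nat.lt_iff_add_one_le, ← Fintype.card_fin (k + 1), ← Finset.card_univ]
  refine Finset.card_le_card_of_injOn _ (fun i _ => mem_latticeCircle.mpr ?_) hinj.injOn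
  rw [← hn i, ← gaussianInt_norm_mk]

theorem norm_quarterAngle_le_of_norm_eq_pow {p : GaussianInt} (hp : Prime p) :
    ∀ {k : ℕ} {z : GaussianInt}, z.norm = p.norm ^ k →
      ‖quarterAngle z‖ ≤ k * ‖quarterAngle p‖
  | 0, z, hz => by
    have hunit : IsUnit z := (Zsqrtd.norm_eq_one_iff' (by norm_num) z).mp (by rw [hz, pow_zero])
    simp [quarterAngle_eq_zero_of_isUnit hunit]
  | k + 1, z, hz => by
    have hdvd : p ∣ z ∨ p ∣ star z := by
      refine hp.dvd_or_dvd ?_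
      rw [← Zsqrtd.norm_eq_mul_conj, hz, pow_succ', Int.cast_mul, Zsqrtd.norm_eq_mul_conj p,
        mul_assoc]
      exact dvd_mul_right _ _
    have hpeel {y : GaussianInt} (hy : y.norm = p.norm ^ (k + 1)) (hpy : p ∣ y) :
        ‖quarterAngle y‖ ≤ (k + 1 : ℕ) * ‖quarterAngle p‖ := by
      obtain ⟨w, rfl⟩ := hpy
      have hp0 := GaussianInt.norm_eq_zero.not.mpr hp.ne_zero
      have hw : w.norm = p.norm ^ k := by
        rw [Zsqrtd.norm_mul, pow_succ'] at hy
        exact mul_left_cancel₀ hp0 hy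
      have hw0 : w ≠ 0 := GaussianInt.norm_eq_zero.not.mp (hw ▸ pow_ne_zero k hp0)
      rw [map_mul, quarterAngle_mul (gaussianInt_toComplex_ne_zero hp.ne_zero)
        (gaussianInt_toComplex_ne_zero hw0)]
      push_cast
      linarith [norm_add_le (quarterAngle p) (quarterAngle w),
        norm_quarterAngle_le_of_norm_eq_pow hp hw]
    rcases hdvd with h | h
    · exact hpeel hz h
    · rw [← norm_neg, ← quarterAngle_star]
      exact hpeel (by rw [Zsqrtd.norm_conj, hz]) h

theorem norm_pow_mul_star_pow (p : GaussianInt) {a k : ℕ} (h : a ≤ k) :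
    (p ^ a * star p ^ (k - a)).norm = p.norm ^ k := by
  have norm_pow (z : GaussianInt) (m : ℕ) : (z ^ m).norm = z.norm ^ m :=
    map_pow Zsqrtd.normMonoidHom z m
  rw [Zsqrtd.norm_mul, norm_pow, norm_pow, Zsqrtd.norm_conj, pow_mul_pow_sub _ h]

theorem injective_pow_mul_star_pow {p : GaussianInt} (hp : p ≠ 0)
    (hθ : ¬IsOfFinAddOrder (quarterAngle p)) (k : ℕ) :
    Function.Injective fun a : Fin (k + 1) => p ^ (a : ℕ) * star p ^ (k - a) := by
  have hp0 := gaussianInt_toComplex_ne_zero hp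
  have hs0 := gaussianInt_toComplex_ne_zero (star_ne_zero.mpr hp)
  have hangle (a : Fin (k + 1)) : quarterAngle (p ^ (a : ℕ) * star p ^ (k - a) : GaussianInt) =
      (2 * a - k : ℤ) • quarterAngle p := by
    rw [map_mul, map_pow, map_pow, quarterAngle_mul (pow_ne_zero _ hp0) (pow_ne_zero _ hs0),
      quarterAngle_pow hp0, quarterAngle_pow hs0, quarterAngle_star, smul_neg, ← natCast_zsmul,
      ← natCast_zsmul, ← neg_zsmul, ← add_zsmul]
    congr 1
    omega
  intro a b hab
  have h := congrArg (fun z : GaussianInt => quarterAngle z) hab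
  simp only [hangle] at h
  have := injective_zsmul_iff_not_isOfFinAddOrder.mpr hθ h
  omega

theorem exists_prime_norm_quarterAngle_lt {ε : ℝ} (hε : 0 < ε) :
    ∃ p : GaussianInt, Prime p ∧ ‖quarterAngle p‖ < ε ∧ ¬IsOfFinAddOrder (quarterAngle p) := by
  obtain ⟨δ, hδ0, hδ⟩ : ∃ δ : ℝ, 0 < δ ∧ δ < min ε (π / 4) := exists_between (by positivity)
  have hδ' : δ < π / 4 := hδ.trans_le (min_le_right _ _)
  have hopen : IsOpen {x : AddCircle (π / 2) | x ≠ 0 ∧ ‖x‖ < min ε (π / 4)} :=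
    isOpen_ne.inter (isOpen_lt continuous_norm continuous_const)
  have hnorm : ‖(δ : AddCircle (π / 2))‖ = δ := by
    rw [(AddCircle.norm_coe_eq_abs_iff (π / 2) Real.pi_div_two_pos.ne').mpr, abs_of_pos hδ0]
    rw [abs_of_pos hδ0, abs_of_pos Real.pi_div_two_pos]
    linarith
  obtain ⟨p, hp0, hp⟩ := denseRange_quarterAngle_normalizedPrime.exists_mem_open hopen
    ⟨δ, by rw [← norm_ne_zero_iff, hnorm]; exact hδ0.ne', by rwa [hnorm]⟩
  have hcop := isCoprime_star_of_norm_quarterAngle_lt p.2.1 hp0 (hp.trans_le (min_le_right _ _))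
  exact ⟨p, p.2.1, hp.trans_le (min_le_left _ _),
    not_isOfFinAddOrder_quarterAngle hcop p.2.1.not_isUnit⟩

/-- Cilleruelo: for every `ε > 0` and every `k`, there is a circle `x² + y² = n` with
more than `k` lattice points, all of which lie within angular distance `ε` (mod `2π`)
of one of the four half-axis directions `t π/2`, `t ∈ {0, 1, 2, 3}`. -/
theorem cilleruelo_badly_distributed (ε : ℝ) (hε : 0 < ε) (k : ℕ) :
    ∃ n : ℕ, 0 < n ∧ k < latticeR n ∧
      ∀ u : ℤ × ℤ, u.1 ^ 2 + u.2 ^ 2 = (n : ℤ) →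
        ∃ t : Fin 4, ∃ j : ℤ,
          |latticeTheta u - (t : ℝ) * Real.pi / 2 - 2 * Real.pi * j| < ε := by
  obtain ⟨p, hp, hsmall, hθ⟩ := exists_prime_norm_quarterAngle_lt
    (div_pos hε (Nat.cast_add_one_pos k))
  have hn : ((p.norm.natAbs ^ k : ℕ) : ℤ) = p.norm ^ k := by
    rw [Nat.cast_pow, GaussianInt.natCast_natAbs_norm, Int.cast_id]
  refine ⟨p.norm.natAbs ^ k, ?_, ?_, fun u hu => exists_abs_sub_lt_of_norm_coe_lt ?_⟩
  · exact pow_pos (Int.natAbs_pos.mpr (GaussianInt.norm_eq_zero.not.mpr hp.ne_zero)) k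
  · refine lt_latticeR_of_injective (injective_pow_mul_star_pow hp.ne_zero hθ k) fun a => ?_
    rw [hn, norm_pow_mul_star_pow p (Nat.le_of_lt_succ a.2)]
  · rw [coe_latticeTheta]
    calc ‖quarterAngle (⟨u.1, u.2⟩ : GaussianInt)‖
      _ ≤ k * ‖quarterAngle p‖ := norm_quarterAngle_le_of_norm_eq_pow hp (by
          rw [gaussianInt_norm_mk, hu, hn])
      _ ≤ (k + 1) * ‖quarterAngle p‖ := by gcongr; exact le_add_of_nonneg_right zero_le_one
      _ < ε := (lt_div_iff₀' (Nat.cast_add_one_pos k)).mp hsmall
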